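/- arXiv:1203.2283 — 8 statements merged into one kernel-verified Lean document; each statement's English description precedes it below -/
import Mathlib

section
/- Let f : [a,b] → ℝ be a differentiable function on [a,b] with f' integrable on [a,b], and let α ≥ 1. Then the following generalized Montgomery identity for fractional integrals holds for every x ∈ [a,b): f(x) = (α+1)Γ(α)·((b−x)^{1−α}/(b−a))·J_a^α f(b) − J_a^{α−1}(P₂(x,·)f)(b) − ((b−x)^{2−α}/(b−a))·Γ(α)·J_a^{α−1} f(b) − ((b−x)^{1−α}(x−a)/(b−a)^{2−α})·f(a) + 2·J_a^α(K₁(x,·)f')(b). -/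
open MeasureTheory intervalIntegral Set

/-- Riemann–Liouville fractional integral of order `α` with base point `a`. -/
noncomputable def RL (a α : ℝ) (f : ℝ → ℝ) (x : ℝ) : ℝ :=
  if α = 0 then f x
  else (1 / Real.Gamma α) * ∫ t in a..x, (x - t) ^ (α - 1) * f t

/-- Fractional Peano kernel `P₂`. -/
noncomputable def P2 (a b α x t : ℝ) : ℝ :=
  if t < x then (t - a) / (b - a) * (b - x) ^ (1 - α) * Real.Gamma α
  else (t - b) / (b - a) * (b - x) ^ (1 - α) * Real.Gamma α

/-- The kernel `K₁`. -/
noncomputable def K1 (a b α x t : ℝ) : ℝ :=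
  if t < x then (t - (a + x) / 2) * ((b - x) ^ (1 - α) / (b - a)) * Real.Gamma α
  else (t - (b + x) / 2) * ((b - x) ^ (1 - α) / (b - a)) * Real.Gamma α

lemma split_ite (a x b : ℝ) (hax : a ≤ x) (hxb : x ≤ b) (h g1 g2 : ℝ → ℝ)
    (h1 : IntervalIntegrable g1 volume a x) (h2 : IntervalIntegrable g2 volume x b)
    (e1 : ∀ t, t < x → h t = g1 t) (e2 : ∀ t, x ≤ t → h t = g2 t) :
    ∫ t in a..b, h t = (∫ t in a..x, g1 t) + ∫ t in x..b, g2 t := by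
  have E1 : EqOn g1 h (uIoo a x) := by
    intro t ht
    rw [uIoo_of_le hax] at ht
    exact (e1 t ht.2).symm
  have E2 : EqOn g2 h (uIoo x b) := by
    intro t ht
    rw [uIoo_of_le hxb] at ht
    exact (e2 t ht.1.le).symm
  rw [integral_congr_uIoo E1, integral_congr_uIoo E2]
  exact (integral_add_adjacent_intervals (h1.congr_uIoo E1) (h2.congr_uIoo E2)).symm

lemma vint (b r c d : ℝ) (hr : -1 < r) :
    IntervalIntegrable (fun t => (b - t) ^ r) volume c d := by
  have := (intervalIntegrable_rpow' (a := b - c) (b := b - d) hr).comp_sub_left b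
  simpa using this

lemma wv (b r t : ℝ) (hr : 0 < r) (ht : t ≤ b) :
    (b - t) ^ r = (b - t) ^ (r - 1) * (b - t) := by
  rcases eq_or_lt_of_le ht with h | h
  · subst h
    simp [Real.zero_rpow hr.ne']
  · rw [Real.rpow_sub_one (by linarith)]
    have : b - t ≠ 0 := by linarith
    field_simp

lemma moment (b r c d m : ℝ) (hr : 0 < r) (hcd : c ≤ d) (hdb : d ≤ b) (f : ℝ → ℝ)
    (hf : ContinuousOn f (Icc c d)) :
    IntervalIntegrable (fun t => (b - t) ^ (r - 1) * (t - m) * f t) volume c d ∧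
    ∫ t in c..d, (b - t) ^ (r - 1) * (t - m) * f t =
      (b - m) * (∫ t in c..d, (b - t) ^ (r - 1) * f t) - ∫ t in c..d, (b - t) ^ r * f t := by
  have hf2 : ContinuousOn f (uIcc c d) := by rwa [uIcc_of_le hcd]
  have hv := (vint b (r - 1) c d (by linarith)).mul_continuousOn hf2
  have hw := (vint b r c d (by linarith)).mul_continuousOn hf2
  constructor
  · exact ((vint b (r - 1) c d (by linarith)).mul_continuousOn
      (by fun_prop : ContinuousOn (fun t => t - m) (uIcc c d))).mul_continuousOn hf2
  · rw [← intervalIntegral.integral_const_mul, ← intervalIntegral.integral_sub (hv.const_mul _) hw]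
    apply integral_congr
    intro t ht
    rw [uIcc_of_le hcd] at ht
    simp only
    rw [wv b r t hr (ht.2.trans hdb)]
    ring

lemma parts (b r c d m : ℝ) (hr : 0 < r) (hcd : c ≤ d) (hdb : d ≤ b) (f f' : ℝ → ℝ)
    (hf : ∀ t ∈ Icc c d, HasDerivAt f (f' t) t) (hf' : IntervalIntegrable f' volume c d) :
    IntervalIntegrable (fun t => (b - t) ^ r * (t - m) * f' t) volume c d ∧
    ∫ t in c..d, (b - t) ^ r * (t - m) * f' t =
      (b - d) ^ r * (d - m) * f d - (b - c) ^ r * (c - m) * f c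
      - (∫ t in c..d, (b - t) ^ r * f t)
      + r * ((b - m) * (∫ t in c..d, (b - t) ^ (r - 1) * f t)
        - ∫ t in c..d, (b - t) ^ r * f t) := by
  have hfc : ContinuousOn f (Icc c d) := fun t ht => (hf t ht).continuousAt.continuousWithinAt
  have hf2 : ContinuousOn f (uIcc c d) := by rwa [uIcc_of_le hcd]
  have hwc : ContinuousOn (fun t : ℝ => (b - t) ^ r * (t - m)) univ := by
    apply ContinuousOn.mul _ (by fun_prop)
    exact ContinuousOn.rpow_const (by fun_prop) (fun t _ => Or.inr hr.le)
  have hw := (vint b r c d (by linarith)).mul_continuousOn hf2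
  obtain ⟨hm, hm'⟩ := moment b r c d m hr hcd hdb f hfc
  have hi : IntervalIntegrable (fun t => (b - t) ^ r * (t - m) * f' t) volume c d :=
    hf'.continuousOn_mul (hwc.mono (subset_univ _))
  refine ⟨hi, ?_⟩
  have key := integral_eq_sub_of_hasDerivAt_of_le (f := fun t => (b - t) ^ r * (t - m) * f t)
    (f' := fun t => (b - t) ^ r * (t - m) * f' t + (b - t) ^ r * f t
      - r * ((b - t) ^ (r - 1) * (t - m) * f t)) hcd
    ((hwc.mono (subset_univ _)).mul hfc)
    (by
      intro t ht
      have h0 : HasDerivAt (fun t : ℝ => b - t) (-1) t := by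
        simpa using (hasDerivAt_id t).const_sub b
      have h1 := h0.rpow_const (p := r) (Or.inl (by linarith [ht.2]))
      have h2 := (h1.mul ((hasDerivAt_id t).sub_const m)).mul (hf t ⟨ht.1.le, ht.2.le⟩)
      refine h2.congr_deriv ?_
      simp
      ring)
    ((hi.add hw).sub (hm.const_mul r))
  rw [intervalIntegral.integral_sub (hi.add hw) (hm.const_mul r),
    intervalIntegral.integral_add hi hw, intervalIntegral.integral_const_mul, hm'] at key
  linarith

lemma parts_one (c d m : ℝ) (hcd : c ≤ d) (f f' : ℝ → ℝ)
    (hf : ∀ t ∈ Icc c d, HasDerivAt f (f' t) t) (hf' : IntervalIntegrable f' volume c d) :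
    IntervalIntegrable (fun t => (t - m) * f' t) volume c d ∧
    ∫ t in c..d, (t - m) * f' t =
      (d - m) * f d - (c - m) * f c - (∫ t in c..d, f t) := by
  have hfc : ContinuousOn f (Icc c d) := fun t ht => (hf t ht).continuousAt.continuousWithinAt
  have hf2 : ContinuousOn f (uIcc c d) := by rwa [uIcc_of_le hcd]
  have hi : IntervalIntegrable (fun t => (t - m) * f' t) volume c d :=
    hf'.continuousOn_mul (by fun_prop)
  refine ⟨hi, ?_⟩
  have key := integral_eq_sub_of_hasDerivAt_of_le (f := fun t => (t - m) * f t)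
    (f' := fun t => (t - m) * f' t + f t) hcd
    ((by fun_prop : ContinuousOn (fun t => t - m) (Icc c d)).mul hfc)
    (by
      intro t ht
      have h2 := ((hasDerivAt_id t).sub_const m).mul (hf t ⟨ht.1.le, ht.2.le⟩)
      refine h2.congr_deriv ?_
      simp
      ring)
    (hi.add hf2.intervalIntegrable)
  rw [intervalIntegral.integral_add hi hf2.intervalIntegrable] at key
  linarith

theorem generalized_montgomery_identity
    (a b α : ℝ) (hab : a < b) (hα : 1 ≤ α)
    (f f' : ℝ → ℝ)
    (hf : ∀ t ∈ Set.Icc a b, HasDerivAt f (f' t) t)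
    (hf' : IntervalIntegrable f' volume a b)
    (x : ℝ) (hx : x ∈ Set.Ico a b) :
    f x =
      (α + 1) * Real.Gamma α * ((b - x) ^ (1 - α) / (b - a)) * RL a α f b
      - RL a (α - 1) (fun t => P2 a b α x t * f t) b
      - ((b - x) ^ (2 - α) / (b - a)) * Real.Gamma α * RL a (α - 1) f b
      - ((b - x) ^ (1 - α) * (x - a) / (b - a) ^ (2 - α)) * f a
      + 2 * RL a α (fun t => K1 a b α x t * f' t) b := by
  obtain ⟨hax, hxb⟩ := hx
  have hf1 : ∀ t ∈ Icc a x, HasDerivAt f (f' t) t := fun t ht => hf t ⟨ht.1, ht.2.trans hxb.le⟩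
  have hf2 : ∀ t ∈ Icc x b, HasDerivAt f (f' t) t := fun t ht => hf t ⟨hax.trans ht.1, ht.2⟩
  have hxm : x ∈ uIcc a b := by rw [uIcc_of_le hab.le]; exact ⟨hax, hxb.le⟩
  have hi1 : IntervalIntegrable f' volume a x := hf'.mono_set (uIcc_subset_uIcc_left hxm)
  have hi2 : IntervalIntegrable f' volume x b := hf'.mono_set (uIcc_subset_uIcc_right hxm)
  have hc1 : ContinuousOn f (Icc a x) := fun t ht => (hf1 t ht).continuousAt.continuousWithinAt
  have hc2 : ContinuousOn f (Icc x b) := fun t ht => (hf2 t ht).continuousAt.continuousWithinAt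
  have hu1 : ContinuousOn f (uIcc a x) := by rwa [uIcc_of_le hax]
  have hu2 : ContinuousOn f (uIcc x b) := by rwa [uIcc_of_le hxb.le]
  have hba : b - a ≠ 0 := by linarith
  have hbx : b - x ≠ 0 := by linarith
  rcases eq_or_lt_of_le hα with h1 | h1
  · subst h1
    obtain ⟨i1, p1⟩ := parts_one a x ((a + x) / 2) hax f f' hf1 hi1
    obtain ⟨i2, p2⟩ := parts_one x b ((b + x) / 2) hxb.le f f' hf2 hi2
    have hK := split_ite a x b hax hxb.le (fun t => K1 a b 1 x t * f' t)
      (fun t => (b - a)⁻¹ * ((t - (a + x) / 2) * f' t))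
      (fun t => (b - a)⁻¹ * ((t - (b + x) / 2) * f' t)) (i1.const_mul _) (i2.const_mul _)
      (by intro t ht; simp [K1, ht]; ring) (by intro t ht; simp [K1, not_lt.2 ht]; ring)
    rw [intervalIntegral.integral_const_mul, intervalIntegral.integral_const_mul, p1, p2] at hK
    have hA := integral_add_adjacent_intervals (μ := volume) hu1.intervalIntegrable
      hu2.intervalIntegrable
    have e2 : (2 : ℝ) - 1 = 1 := by norm_num
    simp only [RL, sub_self, if_true, one_ne_zero, if_false, Real.rpow_zero, one_mul, hK, e2,
      Real.rpow_one, Real.Gamma_one, ← hA]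
    simp only [P2, not_lt.2 hxb.le, if_false]
    field_simp
    ring
  · have hr : 0 < α - 1 := by linarith
    obtain ⟨i1, p1⟩ := parts b (α - 1) a x ((a + x) / 2) hr hax hxb.le f f' hf1 hi1
    obtain ⟨i2, p2⟩ := parts b (α - 1) x b ((b + x) / 2) hr hxb.le le_rfl f f' hf2 hi2
    obtain ⟨j1, q1⟩ := moment b (α - 1) a x a hr hax hxb.le f hc1
    obtain ⟨j2, q2⟩ := moment b (α - 1) x b b hr hxb.le le_rfl f hc2
    have hK := split_ite a x b hax hxb.le (fun t => (b - t) ^ (α - 1) * (K1 a b α x t * f' t))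
      (fun t => ((b - x) ^ (1 - α) / (b - a) * Real.Gamma α) *
        ((b - t) ^ (α - 1) * (t - (a + x) / 2) * f' t))
      (fun t => ((b - x) ^ (1 - α) / (b - a) * Real.Gamma α) *
        ((b - t) ^ (α - 1) * (t - (b + x) / 2) * f' t)) (i1.const_mul _) (i2.const_mul _)
      (by intro t ht; simp only [K1, ht, if_true]; ring)
      (by intro t ht; simp only [K1, not_lt.2 ht, if_false]; ring)
    have hP := split_ite a x b hax hxb.le (fun t => (b - t) ^ (α - 1 - 1) * (P2 a b α x t * f t))
      (fun t => ((b - x) ^ (1 - α) / (b - a) * Real.Gamma α) *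
        ((b - t) ^ (α - 1 - 1) * (t - a) * f t))
      (fun t => ((b - x) ^ (1 - α) / (b - a) * Real.Gamma α) *
        ((b - t) ^ (α - 1 - 1) * (t - b) * f t)) (j1.const_mul _) (j2.const_mul _)
      (by intro t ht; simp only [P2, ht, if_true]; ring)
      (by intro t ht; simp only [P2, not_lt.2 ht, if_false]; ring)
    rw [intervalIntegral.integral_const_mul, intervalIntegral.integral_const_mul, p1, p2] at hK
    rw [intervalIntegral.integral_const_mul, intervalIntegral.integral_const_mul, q1, q2] at hP
    have hA := integral_add_adjacent_intervals (μ := volume)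
      ((vint b (α - 1) a x (by linarith)).mul_continuousOn hu1)
      ((vint b (α - 1) x b (by linarith)).mul_continuousOn hu2)
    have hD := integral_add_adjacent_intervals (μ := volume)
      ((vint b (α - 1 - 1) a x (by linarith)).mul_continuousOn hu1)
      ((vint b (α - 1 - 1) x b (by linarith)).mul_continuousOn hu2)
    have hG : Real.Gamma α = (α - 1) * Real.Gamma (α - 1) := by
      have := Real.Gamma_add_one hr.ne'
      simpa using this
    have hG1 : Real.Gamma (α - 1) ≠ 0 := (Real.Gamma_pos_of_pos hr).ne'
    have hbxp : 0 < b - x := by linarith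
    have hbap : 0 < b - a := by linarith
    have hX : (b - x) ^ (α - 1) = ((b - x) ^ (1 - α))⁻¹ := by
      rw [← Real.rpow_neg hbxp.le]; congr 1; ring
    have hB : (b - a) ^ (α - 1) = ((b - a) ^ (1 - α))⁻¹ := by
      rw [← Real.rpow_neg hbap.le]; congr 1; ring
    have hX2 : (b - x) ^ (2 - α) = (b - x) ^ (1 - α) * (b - x) := by
      rw [← Real.rpow_add_one hbx]; congr 1; ring
    have hB2 : (b - a) ^ (2 - α) = (b - a) ^ (1 - α) * (b - a) := by
      rw [← Real.rpow_add_one hba]; congr 1; ring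
    have hXn : (b - x) ^ (1 - α) ≠ 0 := (Real.rpow_pos_of_pos hbxp _).ne'
    have hBn : (b - a) ^ (1 - α) ≠ 0 := (Real.rpow_pos_of_pos hbap _).ne'
    have hα0 : α ≠ 0 := by linarith
    have hα1 : α - 1 ≠ 0 := hr.ne'
    simp only [RL, hα0, hα1, if_false, hK, hP, ← hA, ← hD, sub_self, Real.zero_rpow hα1, hX2, hB2,
      hX, hB, hG]
    generalize (b - x) ^ (1 - α) = X at *
    generalize (b - a) ^ (1 - α) = B at *
    generalize Real.Gamma (α - 1) = G at *
    generalize (∫ t in a..x, (b - t) ^ (α - 1) * f t) = A1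
    generalize (∫ t in x..b, (b - t) ^ (α - 1) * f t) = A2
    generalize (∫ t in a..x, (b - t) ^ (α - 1 - 1) * f t) = D1
    generalize (∫ t in x..b, (b - t) ^ (α - 1 - 1) * f t) = D2
    field_simp
    ring
end

section
/- Let f be a differentiable function on [a,b] with |f'(x)| ≤ M for all x ∈ [a,b], and let α ≥ 1. Then for every x ∈ [a,b): |(1/2)f(x) − (α+1)Γ(α)·((b−x)^{1−α}/(2(b−a)))·J_a^α f(b) + (1/2)·J_a^{α−1}(P₂(x,·)f)(b) + ((b−x)^{2−α}/(2(b−a)))·Γ(α)·J_a^{α−1} f(b) + ((b−x)^{1−α}(x−a)/(2(b−a)^{2−α}))·f(a)| ≤ (M(b−x)^{1−α}/(b−a))·[((b−a)^α(x−a) + (b−x)^α(a+b−2x))/(2α)]. -/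
open MeasureTheory intervalIntegral Set

lemma aux_int (b r c d : ℝ) (hr : -1 < r) :
    IntervalIntegrable (fun t : ℝ => (b - t) ^ r) volume c d := by
  have h := (intervalIntegral.intervalIntegrable_rpow' (a := b - c) (b := b - d) hr).comp_sub_left b
    (by simp)
  simpa using h

lemma aux_val (b α c d : ℝ) (hα : 1 ≤ α) :
    ∫ t in c..d, (b - t) ^ (α - 1) = ((b - c) ^ α - (b - d) ^ α) / α := by
  rw [intervalIntegral.integral_comp_sub_left (fun t : ℝ => t ^ (α - 1)) b,
    integral_rpow (Or.inl (by linarith))]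
  simp

lemma aux_parts (b α M c d s w : ℝ) (hcd : c ≤ d) (hdb : d ≤ b) (hα : 1 ≤ α)
    (f f' : ℝ → ℝ) (hf : ∀ t ∈ Set.Icc c d, HasDerivAt f (f' t) t)
    (hbound : ∀ t ∈ Set.Icc c d, |f' t| ≤ M) (hw : ∀ t ∈ Set.Icc c d, |s - 2 * t| ≤ w) :
    |(b - d) ^ (α - 1) * (s - 2 * d) * f d - (b - c) ^ (α - 1) * (s - 2 * c) * f c
      + 2 * α * (∫ t in c..d, (b - t) ^ (α - 1) * f t)
      - (α - 1) * (2 * b - s) * (∫ t in c..d, (b - t) ^ (α - 2) * f t)|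
    ≤ M * w * (((b - c) ^ α - (b - d) ^ α) / α) := by
  have hfc : ContinuousOn f (Set.uIcc c d) := by
    rw [Set.uIcc_of_le hcd]
    exact fun t ht => (hf t ht).continuousAt.continuousWithinAt
  have hA : IntervalIntegrable (fun t : ℝ => (b - t) ^ (α - 1)) volume c d :=
    aux_int b _ c d (by linarith)
  have hB : IntervalIntegrable (fun t : ℝ => (α - 1) * (2 * b - s) * (b - t) ^ (α - 2)) volume c d := by
    rcases hα.eq_or_lt with h | h
    · subst h; simp
    · exact (aux_int b _ c d (by linarith)).const_mul _
  have hM' : IntervalIntegrable (deriv f) volume c d := by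
    refine (intervalIntegrable_const (c := M)).mono_fun' (aestronglyMeasurable_deriv f _) ?_
    filter_upwards [ae_restrict_mem measurableSet_uIoc] with t ht
    rw [Set.uIoc_of_le hcd] at ht
    have ht' := Set.Ioc_subset_Icc_self ht
    rw [(hf t ht').deriv]; exact hbound t ht'
  have hcont : Continuous (fun t : ℝ => (b - t) ^ (α - 1) * (s - 2 * t)) := by
    refine Continuous.mul ?_ (by fun_prop)
    exact Continuous.rpow_const (by fun_prop) (fun _ => Or.inr (by linarith))
  have key := intervalIntegral.integral_mul_deriv_eq_deriv_mul_of_hasDerivAt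
    (u := fun t : ℝ => (b - t) ^ (α - 1) * (s - 2 * t))
    (u' := fun t : ℝ => (α - 1) * (2 * b - s) * (b - t) ^ (α - 2) - 2 * α * (b - t) ^ (α - 1))
    (v := f) (v' := deriv f) (a := c) (b := d) hcont.continuousOn hfc
    (by
      intro t ht
      rw [min_eq_left hcd, max_eq_right hcd] at ht
      have hpos : 0 < b - t := by linarith [ht.2]
      have h1 : HasDerivAt (fun t : ℝ => (b - t) ^ (α - 1))
          ((-1) * (α - 1) * (b - t) ^ (α - 1 - 1)) t :=
        ((hasDerivAt_id t).const_sub b).rpow_const (Or.inl hpos.ne')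
      have h2 : HasDerivAt (fun t : ℝ => s - 2 * t) (-(2 * 1)) t :=
        ((hasDerivAt_id t).const_mul 2).const_sub s
      refine (h1.mul h2).congr_deriv ?_
      have e : (b - t) ^ (α - 1) = (b - t) ^ (α - 2) * (b - t) := by
        rw [← Real.rpow_add_one hpos.ne']; ring_nf
      rw [e, show α - 1 - 1 = α - 2 by ring]
      ring)
    (by
      intro t ht
      rw [min_eq_left hcd, max_eq_right hcd] at ht
      exact (hf t (Set.Ioo_subset_Icc_self ht)).differentiableAt.hasDerivAt)
    (hB.sub (hA.const_mul _)) hM'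
  have split : ∫ t in c..d, ((α - 1) * (2 * b - s) * (b - t) ^ (α - 2)
        - 2 * α * (b - t) ^ (α - 1)) * f t
      = (α - 1) * (2 * b - s) * (∫ t in c..d, (b - t) ^ (α - 2) * f t)
        - 2 * α * (∫ t in c..d, (b - t) ^ (α - 1) * f t) := by
    rw [← intervalIntegral.integral_const_mul, ← intervalIntegral.integral_const_mul,
      ← intervalIntegral.integral_sub]
    · congr 1; ext t; ring
    · simpa only [mul_assoc] using hB.mul_continuousOn hfc
    · exact (hA.mul_continuousOn hfc).const_mul _
  have hb : ‖∫ t in c..d, (b - t) ^ (α - 1) * (s - 2 * t) * deriv f t‖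
      ≤ ∫ t in c..d, M * w * (b - t) ^ (α - 1) := by
    refine intervalIntegral.norm_integral_le_of_norm_le hcd ?_ (hA.const_mul _)
    refine Filter.Eventually.of_forall fun t ht => ?_
    have ht' := Set.Ioc_subset_Icc_self ht
    have hp : 0 ≤ (b - t) ^ (α - 1) := Real.rpow_nonneg (by linarith [ht.2]) _
    rw [(hf t ht').deriv, Real.norm_eq_abs, abs_mul, abs_mul, abs_of_nonneg hp]
    have h1 := hw t ht'
    have h2 := hbound t ht'
    calc (b - t) ^ (α - 1) * |s - 2 * t| * |f' t| = (b - t) ^ (α - 1) * (|f' t| * |s - 2 * t|) := by ring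
      _ ≤ (b - t) ^ (α - 1) * (M * w) := by
        apply mul_le_mul_of_nonneg_left _ hp
        exact mul_le_mul h2 h1 (abs_nonneg _) ((abs_nonneg _).trans h2)
      _ = _ := by ring
  rw [intervalIntegral.integral_const_mul, aux_val b α c d hα, key, split, Real.norm_eq_abs] at hb
  convert hb using 2
  ring

theorem fractional_ostrowski_gruss
    (a b α M : ℝ) (hab : a < b) (hα : 1 ≤ α) (hM : 0 < M)
    (f f' : ℝ → ℝ)
    (hf : ∀ t ∈ Set.Icc a b, HasDerivAt f (f' t) t)
    (hbound : ∀ t ∈ Set.Icc a b, |f' t| ≤ M)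
    (x : ℝ) (hx : x ∈ Set.Ico a b) :
    |(1 / 2) * f x
      - (α + 1) * Real.Gamma α * ((b - x) ^ (1 - α) / (2 * (b - a))) * RL a α f b
      + (1 / 2) * RL a (α - 1) (fun t => P2 a b α x t * f t) b
      + ((b - x) ^ (2 - α) / (2 * (b - a))) * Real.Gamma α * RL a (α - 1) f b
      + ((b - x) ^ (1 - α) * (x - a) / (2 * (b - a) ^ (2 - α))) * f a|
    ≤ M * (b - x) ^ (1 - α) / (b - a) *
        (((b - a) ^ α * (x - a) + (b - x) ^ α * (a + b - 2 * x)) / (2 * α)) := by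
  obtain ⟨hax, hxb⟩ := hx
  have hL : 0 < b - a := by linarith
  have hv : 0 < b - x := by linarith
  have p1 := aux_parts b α M a x (a + x) (x - a) hax hxb.le hα f f'
    (fun t ht => hf t ⟨ht.1, ht.2.trans hxb.le⟩) (fun t ht => hbound t ⟨ht.1, ht.2.trans hxb.le⟩)
    (fun t ht => abs_le.2 ⟨by linarith [ht.1, ht.2], by linarith [ht.1, ht.2]⟩)
  have p2 := aux_parts b α M x b (b + x) (b - x) hxb.le le_rfl hα f f'
    (fun t ht => hf t ⟨hax.trans ht.1, ht.2⟩) (fun t ht => hbound t ⟨hax.trans ht.1, ht.2⟩)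
    (fun t ht => abs_le.2 ⟨by linarith [ht.1, ht.2], by linarith [ht.1, ht.2]⟩)
  have hfc : ContinuousOn f (Set.Icc a b) :=
    fun t ht => (hf t ht).continuousAt.continuousWithinAt
  have hf1 : ContinuousOn f (Set.uIcc a x) := by
    rw [Set.uIcc_of_le hax]; exact hfc.mono (Set.Icc_subset_Icc_right hxb.le)
  have hf2 : ContinuousOn f (Set.uIcc x b) := by
    rw [Set.uIcc_of_le hxb.le]; exact hfc.mono (Set.Icc_subset_Icc_left hax)
  have hα0 : α ≠ 0 := by linarith
  have hG : Real.Gamma α ≠ 0 := (Real.Gamma_pos_of_pos (by linarith)).ne'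
  have iA : ∀ c d, IntervalIntegrable (fun t : ℝ => (b - t) ^ (α - 1)) volume c d :=
    fun c d => aux_int b _ c d (by linarith)
  have eA := intervalIntegral.integral_add_adjacent_intervals
    ((iA a x).mul_continuousOn hf1) ((iA x b).mul_continuousOn hf2)
  have hc : 0 < (b - x) ^ (1 - α) := Real.rpow_pos_of_pos hv _
  have ec : (b - x) ^ (1 - α) * (b - x) ^ (α - 1) = 1 := by
    rw [← Real.rpow_add hv]; simp
  have e2 : (b - x) ^ (2 - α) = (b - x) ^ (1 - α) * (b - x) := by
    rw [← Real.rpow_add_one hv.ne']; ring_nf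
  have eL : (b - a) ^ (2 - α) * (b - a) ^ (α - 1) = b - a := by
    rw [← Real.rpow_add hL]; ring_nf; simp
  have hLp : 0 < (b - a) ^ (2 - α) := Real.rpow_pos_of_pos hL _
  have eLa : (b - x) ^ (1 - α) * (x - a) / (2 * (b - a) ^ (2 - α))
      = (b - x) ^ (1 - α) / (2 * (b - a)) * ((b - a) ^ (α - 1) * (x - a)) := by
    rw [div_mul_eq_mul_div, div_eq_div_iff (by positivity) (by positivity)]
    linear_combination (-2 * (b - x) ^ (1 - α) * (x - a)) * eL
  have zα : (b - b) ^ α = 0 := by rw [sub_self, Real.zero_rpow hα0]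
  have ev : (b - x) ^ α = (b - x) ^ (α - 1) * (b - x) := by
    rw [← Real.rpow_add_one hv.ne']; ring_nf
  have hA : RL a α f b = 1 / Real.Gamma α * ((∫ t in a..x, (b - t) ^ (α - 1) * f t)
      + ∫ t in x..b, (b - t) ^ (α - 1) * f t) := by
    rw [RL, if_neg hα0, eA]
  -- the combined lower-order terms
  have hB : (1 / 2) * RL a (α - 1) (fun t => P2 a b α x t * f t) b
      + ((b - x) ^ (2 - α) / (2 * (b - a))) * Real.Gamma α * RL a (α - 1) f b
      = (b - x) ^ (1 - α) / (2 * (b - a)) *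
        ((α - 1) * (2 * b - a - x) * (∫ t in a..x, (b - t) ^ (α - 2) * f t)
        - (α - 1) * (∫ t in a..x, (b - t) ^ (α - 1) * f t)
        + (α - 1) * (b - x) * (∫ t in x..b, (b - t) ^ (α - 2) * f t)
        - (α - 1) * (∫ t in x..b, (b - t) ^ (α - 1) * f t)
        + (b - b) ^ (α - 1) * (b - x) * f b) := by
    rcases hα.eq_or_lt with h | h
    · subst h
      simp [RL, P2, not_lt.2 hxb.le, show (2:ℝ) - 1 = 1 by norm_num]
      field_simp
    · have hα1 : α - 1 ≠ 0 := by linarith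
      have z1 : (b - b) ^ (α - 1) = 0 := by rw [sub_self, Real.zero_rpow hα1]
      have iB : ∀ c d, IntervalIntegrable (fun t : ℝ => (b - t) ^ (α - 2)) volume c d :=
        fun c d => aux_int b _ c d (by linarith)
      have eB := intervalIntegral.integral_add_adjacent_intervals
        ((iB a x).mul_continuousOn hf1) ((iB x b).mul_continuousOn hf2)
      have hG1 : Real.Gamma (α - 1) ≠ 0 := (Real.Gamma_pos_of_pos (by linarith)).ne'
      have hGG : Real.Gamma α = (α - 1) * Real.Gamma (α - 1) := by
        rw [← Real.Gamma_add_one hα1]; ring_nf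
      have epow : ∀ t, t < b → (b - t) ^ (α - 1) = (b - t) ^ (α - 2) * (b - t) := by
        intro t ht
        rw [← Real.rpow_add_one (sub_pos.2 ht).ne']; ring_nf
      set K := (b - x) ^ (1 - α) * Real.Gamma α / (b - a) with hK
      have g1 : Set.EqOn (fun t => (b - t) ^ (α - 2) * (P2 a b α x t * f t))
          (fun t => K * ((b - a) * ((b - t) ^ (α - 2) * f t) - (b - t) ^ (α - 1) * f t))
          (Set.Ioo a x) := by
        intro t ht
        simp only [P2, if_pos ht.2, epow t (ht.2.trans hxb), hK]
        field_simp
        ring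
      have g2 : Set.EqOn (fun t => (b - t) ^ (α - 2) * (P2 a b α x t * f t))
          (fun t => -K * ((b - t) ^ (α - 1) * f t)) (Set.Ioo x b) := by
        intro t ht
        simp only [P2, if_neg (not_lt.2 ht.1.le), epow t ht.2, hK]
        field_simp
        ring
      have j1 : IntervalIntegrable (fun t => K * ((b - a) * ((b - t) ^ (α - 2) * f t)
          - (b - t) ^ (α - 1) * f t)) volume a x :=
        ((((iB a x).mul_continuousOn hf1).const_mul _).sub
          ((iA a x).mul_continuousOn hf1)).const_mul _
      have j2 : IntervalIntegrable (fun t => -K * ((b - t) ^ (α - 1) * f t)) volume x b :=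
        ((iA x b).mul_continuousOn hf2).const_mul _
      have k1 : IntervalIntegrable (fun t => (b - t) ^ (α - 2) * (P2 a b α x t * f t))
          volume a x := j1.congr_uIoo (by rw [Set.uIoo_of_le hax]; exact g1.symm)
      have k2 : IntervalIntegrable (fun t => (b - t) ^ (α - 2) * (P2 a b α x t * f t))
          volume x b := j2.congr_uIoo (by rw [Set.uIoo_of_le hxb.le]; exact g2.symm)
      rw [RL, RL, if_neg hα1, if_neg hα1, show α - 1 - 1 = α - 2 by ring, ← eB,
        ← intervalIntegral.integral_add_adjacent_intervals k1 k2,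
        intervalIntegral.integral_congr_Ioo_of_le hax g1,
        intervalIntegral.integral_congr_Ioo_of_le hxb.le g2,
        intervalIntegral.integral_const_mul, intervalIntegral.integral_const_mul,
        intervalIntegral.integral_sub (((iB a x).mul_continuousOn hf1).const_mul _)
          ((iA a x).mul_continuousOn hf1),
        intervalIntegral.integral_const_mul, z1, e2, hK, hGG]
      field_simp
      ring
  rw [zα] at p2
  rw [add_assoc (_ - _) _ _, hB, hA, eLa]
  generalize (∫ t in a..x, (b - t) ^ (α - 2) * f t) = B1 at *
  generalize (∫ t in x..b, (b - t) ^ (α - 2) * f t) = B2 at *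
  generalize (∫ t in a..x, (b - t) ^ (α - 1) * f t) = A1 at *
  generalize (∫ t in x..b, (b - t) ^ (α - 1) * f t) = A2 at *
  have tri := (abs_add_le _ _).trans (add_le_add p1 p2)
  have hk : 0 < (b - x) ^ (1 - α) / (2 * (b - a)) := by positivity
  have fin := mul_le_mul_of_nonneg_left tri hk.le
  rw [← abs_of_pos hk, ← abs_mul, abs_of_pos hk] at fin
  rw [← abs_neg] at fin
  refine le_of_eq_of_le (congrArg _ ?_) (fin.trans (le_of_eq ?_))
  · have ex : 1 / 2 * f x = (b - x) ^ (1 - α) / (2 * (b - a)) * ((b - a) * (b - x) ^ (α - 1) * f x) := by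
      have : (b - x) ^ (1 - α) / (2 * (b - a)) * ((b - a) * (b - x) ^ (α - 1) * f x)
        = ((b - x) ^ (1 - α) * (b - x) ^ (α - 1)) * ((b - a) / (2 * (b - a))) * f x := by ring
      rw [this, ec]; field_simp
    rw [ex]
    field_simp
    ring
  · field_simp
    ring
end

section
/- Let f be a differentiable function on [a,b] with |f'(x)| ≤ M for all x ∈ [a,b]. Then for every x ∈ [a,b]: |(1/2)f(x) − ((x−b)f(b) − (x−a)f(a))/(2(b−a)) − (1/(b−a)) ∫_a^b f(t) dt| ≤ (M/(b−a))·[((x−a)² + (b−x)²)/2]. -/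
open MeasureTheory intervalIntegral Set

lemma trap_aux (f : ℝ → ℝ) (M c d : ℝ) (hcd : c ≤ d)
    (hc : ContinuousOn f (Set.Icc c d))
    (hl : ∀ s ∈ Set.Icc c d, ∀ t ∈ Set.Icc c d, |f t - f s| ≤ M * |t - s|) :
    |(d - c) / 2 * (f c + f d) - ∫ t in c..d, f t| ≤ M * (d - c) ^ 2 / 2 := by
  have hi : IntervalIntegrable f volume c d := hc.intervalIntegrable_of_Icc hcd
  have h1 : ∫ t in c..d, ((f c + f d) / 2 - f t)
      = (d - c) / 2 * (f c + f d) - ∫ t in c..d, f t := by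
    rw [intervalIntegral.integral_sub intervalIntegrable_const hi,
      intervalIntegral.integral_const, smul_eq_mul]
    ring
  rw [← h1]
  have h2 := intervalIntegral.norm_integral_le_of_norm_le_const (a := c) (b := d)
    (f := fun t => (f c + f d) / 2 - f t) (C := M * (d - c) / 2) (by
      intro t ht
      rw [Set.uIoc_of_le hcd] at ht
      have ht' : t ∈ Set.Icc c d := ⟨ht.1.le, ht.2⟩
      have e1 := hl c ⟨le_rfl, hcd⟩ t ht'
      have e2 := hl t ht' d ⟨hcd, le_rfl⟩
      rw [abs_of_nonneg (by linarith [ht.1] : 0 ≤ t - c)] at e1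
      rw [abs_of_nonneg (by linarith [ht.2] : 0 ≤ d - t)] at e2
      rw [abs_le] at e1 e2
      rw [Real.norm_eq_abs, abs_le]
      constructor <;> linarith [e1.1, e1.2, e2.1, e2.2])
  rw [Real.norm_eq_abs, abs_of_nonneg (by linarith : 0 ≤ d - c)] at h2
  calc _ ≤ _ := h2
    _ = _ := by ring

theorem ostrowski_gruss_alpha_one
    (a b M : ℝ) (hab : a < b) (hM : 0 < M)
    (f f' : ℝ → ℝ)
    (hf : ∀ t ∈ Set.Icc a b, HasDerivAt f (f' t) t)
    (hbound : ∀ t ∈ Set.Icc a b, |f' t| ≤ M)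
    (x : ℝ) (hx : x ∈ Set.Icc a b) :
    |(1 / 2) * f x - ((x - b) * f b - (x - a) * f a) / (2 * (b - a))
        - (1 / (b - a)) * ∫ t in a..b, f t|
      ≤ M / (b - a) * (((x - a) ^ 2 + (b - x) ^ 2) / 2) := by
  have hl : ∀ s ∈ Set.Icc a b, ∀ t ∈ Set.Icc a b, |f t - f s| ≤ M * |t - s| := by
    intro s hs t ht
    exact (convex_Icc a b).norm_image_sub_le_of_norm_hasDerivWithin_le
      (fun u hu => (hf u hu).hasDerivWithinAt) hbound hs ht
  have hc : ContinuousOn f (Set.Icc a b) := fun t ht => (hf t ht).continuousAt.continuousWithinAt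
  have s1 : Set.Icc a x ⊆ Set.Icc a b := Set.Icc_subset_Icc le_rfl hx.2
  have s2 : Set.Icc x b ⊆ Set.Icc a b := Set.Icc_subset_Icc hx.1 le_rfl
  have t1 := trap_aux f M a x hx.1 (hc.mono s1) (fun s hs t ht => hl s (s1 hs) t (s1 ht))
  have t2 := trap_aux f M x b hx.2 (hc.mono s2) (fun s hs t ht => hl s (s2 hs) t (s2 ht))
  have hsum := intervalIntegral.integral_add_adjacent_intervals
    ((hc.mono s1).intervalIntegrable_of_Icc (μ := volume) hx.1)
    ((hc.mono s2).intervalIntegrable_of_Icc (μ := volume) hx.2)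
  rw [← hsum]
  have hpos : 0 < b - a := by linarith
  have hne : b - a ≠ 0 := hpos.ne'
  generalize (∫ t in a..x, f t) = I at *
  generalize (∫ t in x..b, f t) = J at *
  have e : (1 / 2) * f x - ((x - b) * f b - (x - a) * f a) / (2 * (b - a))
        - (1 / (b - a)) * (I + J)
      = (((x - a) / 2 * (f a + f x) - I) + ((b - x) / 2 * (f x + f b) - J)) / (b - a) := by
    field_simp
    ring
  rw [e, abs_div, abs_of_pos hpos, div_mul_eq_mul_div M]
  apply div_le_div_of_nonneg_right _ hpos.le
  refine (abs_add_le _ _).trans ?_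
  linarith
end

section
/- Let I ⊂ ℝ be an open interval, a, b ∈ I with a < b, and let f : I → ℝ be differentiable with constants γ, Γ ∈ ℝ satisfying γ ≤ f'(x) ≤ Γ for all x ∈ [a,b]. Then for all x ∈ [a,b]: |(1/2)f(x) − ((x−b)f(b) − (x−a)f(a))/(2(b−a)) − (1/(b−a)) ∫_a^b f(t) dt| ≤ ((x−a)² + (b−x)²)/(8(b−a)) · (Γ − γ). -/
open MeasureTheory intervalIntegral Set


theorem trap_upper (f : ℝ → ℝ) (p q γ Γ : ℝ) (hpq : p ≤ q) (hc : ContinuousOn f (Set.Icc p q))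
    (h1 : ∀ t ∈ Set.Icc p q, f t - f p ≤ Γ * (t - p))
    (h2 : ∀ t ∈ Set.Icc p q, γ * (q - t) ≤ f q - f t) :
    ∫ t in p..q, f t ≤ (q - p) / 2 * (f p + f q) + (q - p) ^ 2 / 8 * (Γ - γ) := by
  have hpc : p ≤ (p + q) / 2 := by linarith
  have hcq : (p + q) / 2 ≤ q := by linarith
  have i1 : IntervalIntegrable f volume p ((p + q) / 2) :=
    (hc.mono (Set.Icc_subset_Icc_right hcq)).intervalIntegrable_of_Icc hpc
  have i2 : IntervalIntegrable f volume ((p + q) / 2) q :=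
    (hc.mono (Set.Icc_subset_Icc_left hpc)).intervalIntegrable_of_Icc hcq
  have e1 : ∫ t in p..((p + q) / 2), f t ≤ ∫ t in p..((p + q) / 2), ((f p - Γ * p) + Γ * t) := by
    apply intervalIntegral.integral_mono_on hpc i1
      (Continuous.intervalIntegrable (by fun_prop) _ _)
    intro t ht
    have := h1 t ⟨ht.1, ht.2.trans hcq⟩
    linarith
  have e2 : ∫ t in ((p + q) / 2)..q, f t ≤ ∫ t in ((p + q) / 2)..q, ((f q - γ * q) + γ * t) := by
    apply intervalIntegral.integral_mono_on hcq i2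
      (Continuous.intervalIntegrable (by fun_prop) _ _)
    intro t ht
    have := h2 t ⟨hpc.trans ht.1, ht.2⟩
    linarith
  have key : ∀ u v A B : ℝ, ∫ t in u..v, (A + B * t) = A * (v - u) + B * ((v ^ 2 - u ^ 2) / 2) := by
    intro u v A B
    rw [intervalIntegral.integral_add (Continuous.intervalIntegrable (by fun_prop) _ _)
      (Continuous.intervalIntegrable (by fun_prop) _ _), intervalIntegral.integral_const,
      intervalIntegral.integral_const_mul, integral_id, smul_eq_mul]
    ring
  rw [key] at e1 e2
  rw [← intervalIntegral.integral_add_adjacent_intervals i1 i2]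
  refine (add_le_add e1 e2).trans (le_of_eq ?_)
  ring

theorem trap_abs (f : ℝ → ℝ) (p q γ Γ : ℝ) (hpq : p ≤ q) (hc : ContinuousOn f (Set.Icc p q))
    (h1 : ∀ s ∈ Set.Icc p q, ∀ t ∈ Set.Icc p q, s ≤ t → f t - f s ≤ Γ * (t - s))
    (h2 : ∀ s ∈ Set.Icc p q, ∀ t ∈ Set.Icc p q, s ≤ t → γ * (t - s) ≤ f t - f s) :
    |(q - p) / 2 * (f p + f q) - ∫ t in p..q, f t| ≤ (q - p) ^ 2 / 8 * (Γ - γ) := by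
  have hp : p ∈ Set.Icc p q := ⟨le_rfl, hpq⟩
  have hq : q ∈ Set.Icc p q := ⟨hpq, le_rfl⟩
  have u := trap_upper f p q γ Γ hpq hc (fun t ht => h1 p hp t ht ht.1)
    (fun t ht => h2 t ht q hq ht.2)
  have l := trap_upper (fun t => - f t) p q (-Γ) (-γ) hpq hc.neg
    (fun t ht => by have := h2 p hp t ht ht.1; linarith)
    (fun t ht => by have := h1 t ht q hq ht.2; linarith)
  rw [intervalIntegral.integral_neg] at l
  rw [abs_le]
  constructor <;> linarith

theorem cheng_ostrowski_gruss
    (I : Set ℝ) (hI : IsOpen I) (hI' : I.OrdConnected)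
    (a b : ℝ) (ha : a ∈ I) (hb : b ∈ I) (hab : a < b)
    (f f' : ℝ → ℝ)
    (hf : ∀ t ∈ I, HasDerivAt f (f' t) t)
    (γ Γ : ℝ)
    (hγ : ∀ t ∈ Set.Icc a b, γ ≤ f' t)
    (hΓ : ∀ t ∈ Set.Icc a b, f' t ≤ Γ)
    (x : ℝ) (hx : x ∈ Set.Icc a b) :
    |(1 / 2) * f x - ((x - b) * f b - (x - a) * f a) / (2 * (b - a))
        - (1 / (b - a)) * ∫ t in a..b, f t|
      ≤ ((x - a) ^ 2 + (b - x) ^ 2) / (8 * (b - a)) * (Γ - γ) := by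
  have hsub : Set.Icc a b ⊆ I := hI'.out ha hb
  have hc : ContinuousOn f (Set.Icc a b) := fun t ht =>
    (hf t (hsub ht)).continuousAt.continuousWithinAt
  have hd : DifferentiableOn ℝ f (interior (Set.Icc a b)) := fun t ht =>
    (hf t (hsub (interior_subset ht))).differentiableAt.differentiableWithinAt
  have h1 : ∀ s ∈ Set.Icc a b, ∀ t ∈ Set.Icc a b, s ≤ t → f t - f s ≤ Γ * (t - s) :=
    (convex_Icc a b).image_sub_le_mul_sub_of_deriv_le hc hd (fun t ht => by
      rw [(hf t (hsub (interior_subset ht))).deriv]; exact hΓ t (interior_subset ht))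
  have h2 : ∀ s ∈ Set.Icc a b, ∀ t ∈ Set.Icc a b, s ≤ t → γ * (t - s) ≤ f t - f s :=
    (convex_Icc a b).mul_sub_le_image_sub_of_le_deriv hc hd (fun t ht => by
      rw [(hf t (hsub (interior_subset ht))).deriv]; exact hγ t (interior_subset ht))
  have s1 : Set.Icc a x ⊆ Set.Icc a b := Set.Icc_subset_Icc_right hx.2
  have s2 : Set.Icc x b ⊆ Set.Icc a b := Set.Icc_subset_Icc_left hx.1
  have t1 := trap_abs f a x γ Γ hx.1 (hc.mono s1)
    (fun s hs t ht => h1 s (s1 hs) t (s1 ht)) (fun s hs t ht => h2 s (s1 hs) t (s1 ht))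
  have t2 := trap_abs f x b γ Γ hx.2 (hc.mono s2)
    (fun s hs t ht => h1 s (s2 hs) t (s2 ht)) (fun s hs t ht => h2 s (s2 hs) t (s2 ht))
  have hadd := intervalIntegral.integral_add_adjacent_intervals
    ((hc.mono s1).intervalIntegrable_of_Icc (μ := volume) hx.1)
    ((hc.mono s2).intervalIntegrable_of_Icc (μ := volume) hx.2)
  have hL : 0 < b - a := sub_pos.2 hab
  rw [← hadd]
  generalize (∫ t in a..x, f t) = A at *
  generalize (∫ t in x..b, f t) = B at *
  have e : (1 / 2) * f x - ((x - b) * f b - (x - a) * f a) / (2 * (b - a))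
        - (1 / (b - a)) * (A + B) = (((x - a) / 2 * (f a + f x) - A)
          + ((b - x) / 2 * (f x + f b) - B)) / (b - a) := by
    field_simp
    ring
  have e' : ((x - a) ^ 2 + (b - x) ^ 2) / (8 * (b - a)) * (Γ - γ)
      = ((x - a) ^ 2 / 8 * (Γ - γ) + (b - x) ^ 2 / 8 * (Γ - γ)) / (b - a) := by
    field_simp
  rw [e, e', abs_div, abs_of_pos hL]
  gcongr
  exact (abs_add_le _ _).trans (add_le_add t1 t2)
end

section
/- Let I ⊂ ℝ be an open interval, a, b ∈ I with a < b, and let f : I → ℝ be differentiable with constants γ, Γ ∈ ℝ satisfying γ ≤ f'(x) ≤ Γ for all x ∈ [a,b]. Then for all x ∈ [a,b]: |f(x) − ((f(b) − f(a))/(b−a))·(x − (a+b)/2) − (1/(b−a)) ∫_a^b f(t) dt| ≤ (1/4)(b−a)(Γ − γ). -/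
open MeasureTheory intervalIntegral Set

theorem dragomir_wang_matic_ostrowski_gruss
    (I : Set ℝ) (hI : IsOpen I) (hI' : I.OrdConnected)
    (a b : ℝ) (ha : a ∈ I) (hb : b ∈ I) (hab : a < b)
    (f f' : ℝ → ℝ)
    (hf : ∀ t ∈ I, HasDerivAt f (f' t) t)
    (γ Γ : ℝ)
    (hγ : ∀ t ∈ Set.Icc a b, γ ≤ f' t)
    (hΓ : ∀ t ∈ Set.Icc a b, f' t ≤ Γ)
    (x : ℝ) (hx : x ∈ Set.Icc a b) :
    |f x - (f b - f a) / (b - a) * (x - (a + b) / 2)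
        - (1 / (b - a)) * ∫ t in a..b, f t|
      ≤ (1 / 4) * (b - a) * (Γ - γ) := by
  have hsub : Icc a b ⊆ I := hI'.out ha hb
  have hc : ContinuousOn f I := fun t ht => (hf t ht).continuousAt.continuousWithinAt
  have hF : ∀ t ∈ Icc a b, HasDerivAt (fun u => ∫ s in a..u, f s) (f t) t := by
    intro t ht
    refine integral_hasDerivAt_right ?_ (hc.stronglyMeasurableAtFilter hI t (hsub ht))
      (hf t (hsub ht)).continuousAt
    apply ContinuousOn.intervalIntegrable
    rw [uIcc_of_le ht.1]
    exact hc.mono ((Icc_subset_Icc_right ht.2).trans hsub)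
  have hFa : (∫ s in a..a, f s) = 0 := integral_same
  generalize hFF : (fun u => ∫ s in a..u, f s) = F at hF
  have e1 : (∫ s in a..b, f s) = F b := by rw [← hFF]
  have e2 : F a = 0 := by rw [← hFF]; exact hFa
  rw [e1]
  obtain ⟨hax, hxb⟩ := hx
  set c := (γ + Γ) / 2 with hcdef
  have key : ∀ k p q : ℝ, a ≤ p → p ≤ q → q ≤ b →
      (∀ t ∈ Icc p q, |t - k| ≤ (b - a) / 2) →
      |((q - k) * (f q - c * q) - (F q - c * q ^ 2 / 2))
        - ((p - k) * (f p - c * p) - (F p - c * p ^ 2 / 2))|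
        ≤ (b - a) / 2 * ((Γ - γ) / 2) * (q - p) := by
    intro k p q hap hpq hqb hk
    have h := (convex_Icc p q).norm_image_sub_le_of_norm_hasDerivWithin_le
      (f := fun t => (t - k) * (f t - c * t) - (F t - c * t ^ 2 / 2))
      (f' := fun t => (t - k) * (f' t - c)) (C := (b - a) / 2 * ((Γ - γ) / 2))
      (x := p) (y := q) ?_ ?_ (left_mem_Icc.2 hpq) (right_mem_Icc.2 hpq)
    · simpa [Real.norm_eq_abs, abs_of_nonneg (sub_nonneg.2 hpq)] using h
    · intro t ht
      have ht' : t ∈ Icc a b := ⟨hap.trans ht.1, ht.2.trans hqb⟩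
      have hid := hasDerivAt_id' t
      have := ((hid.sub_const k).mul ((hf t (hsub ht')).sub (hid.const_mul c))).sub
        ((hF t ht').sub (((hid.pow 2).const_mul c).div_const 2))
      refine (this.congr_deriv ?_).hasDerivWithinAt
      simp
      ring
    · intro t ht
      have ht' : t ∈ Icc a b := ⟨hap.trans ht.1, ht.2.trans hqb⟩
      rw [Real.norm_eq_abs, abs_mul]
      have h2 : |f' t - c| ≤ (Γ - γ) / 2 := by
        have := hγ t ht'
        have := hΓ t ht'
        rw [abs_le]; constructor <;> linarith
      exact mul_le_mul (hk t ht) h2 (abs_nonneg _) (by linarith)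
  have k1 := key (a + x - (a + b) / 2) a x le_rfl hax hxb (by
    rintro t ⟨h1, h2⟩
    rw [abs_le]; constructor <;> linarith)
  have k2 := key (b + x - (a + b) / 2) x b hax hxb le_rfl (by
    rintro t ⟨h1, h2⟩
    rw [abs_le]; constructor <;> linarith)
  have hpos : 0 < b - a := by linarith
  have e3 : f x - (f b - f a) / (b - a) * (x - (a + b) / 2) - (1 / (b - a)) * F b
      = ((b - a) * f x - (f b - f a) * (x - (a + b) / 2) - F b) / (b - a) := by
    field_simp
  rw [e3, abs_div, abs_of_pos hpos, div_le_iff₀ hpos]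
  rw [e2] at k1
  rw [abs_le] at k1 k2 ⊢
  constructor <;> nlinarith [k1.1, k1.2, k2.1, k2.2]
end

section
/- Let f : [a,b] → ℝ be a differentiable function with bounded derivative, i.e. ‖f'‖_∞ = sup_{t∈[a,b]} |f'(t)| < ∞. Then for every x ∈ [a,b]: |f(x) − (1/(b−a)) ∫_a^b f(t) dt| ≤ [1/4 + (x − (a+b)/2)²/(b−a)²]·(b−a)·‖f'‖_∞. -/
open MeasureTheory intervalIntegral Set

theorem ostrowski_inequality
    (a b : ℝ) (hab : a < b)
    (f f' : ℝ → ℝ)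
    (hf : ∀ t ∈ Set.Icc a b, HasDerivAt f (f' t) t)
    (hbdd : BddAbove ((fun t => |f' t|) '' Set.Icc a b))
    (x : ℝ) (hx : x ∈ Set.Icc a b) :
    |f x - (1 / (b - a)) * ∫ t in a..b, f t|
      ≤ (1 / 4 + (x - (a + b) / 2) ^ 2 / (b - a) ^ 2) * (b - a) *
          sSup ((fun t => |f' t|) '' Set.Icc a b) := by
  set M := sSup ((fun t => |f' t|) '' Set.Icc a b) with hM
  have hMb : ∀ t ∈ Set.Icc a b, ‖f' t‖ ≤ M := fun t ht =>
    le_csSup hbdd (Set.mem_image_of_mem _ ht)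
  have hlip : ∀ t ∈ Set.Icc a b, |f x - f t| ≤ M * |x - t| := fun t ht =>
    (convex_Icc a b).norm_image_sub_le_of_norm_hasDerivWithin_le
      (fun s hs => (hf s hs).hasDerivWithinAt) hMb ht hx
  have hcont : ContinuousOn f (Set.Icc a b) := fun t ht =>
    (hf t ht).continuousAt.continuousWithinAt
  have hx1 := hx.1
  have hx2 := hx.2
  have hi1 : IntervalIntegrable (fun t => f x - f t) volume a x := by
    apply ContinuousOn.intervalIntegrable
    rw [Set.uIcc_of_le hx1]
    exact continuousOn_const.sub (hcont.mono (Set.Icc_subset_Icc le_rfl hx2))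
  have hi2 : IntervalIntegrable (fun t => f x - f t) volume x b := by
    apply ContinuousOn.intervalIntegrable
    rw [Set.uIcc_of_le hx2]
    exact continuousOn_const.sub (hcont.mono (Set.Icc_subset_Icc hx1 le_rfl))
  have hif : IntervalIntegrable f volume a b := by
    apply ContinuousOn.intervalIntegrable
    rwa [Set.uIcc_of_le hab.le]
  have e1 : |∫ t in a..x, (f x - f t)| ≤ ∫ t in a..x, M * (x - t) := by
    rw [← Real.norm_eq_abs]
    refine intervalIntegral.norm_integral_le_of_norm_le hx1 ?_
      (Continuous.intervalIntegrable (μ := volume) (u := fun t => M * (x - t)) (by fun_prop) _ _)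
    refine Filter.Eventually.of_forall fun t ht => ?_
    have h := hlip t ⟨ht.1.le, ht.2.trans hx2⟩
    rwa [abs_of_nonneg (sub_nonneg.2 ht.2)] at h
  have e2 : |∫ t in x..b, (f x - f t)| ≤ ∫ t in x..b, M * (t - x) := by
    rw [← Real.norm_eq_abs]
    refine intervalIntegral.norm_integral_le_of_norm_le hx2 ?_
      (Continuous.intervalIntegrable (μ := volume) (u := fun t => M * (t - x)) (by fun_prop) _ _)
    refine Filter.Eventually.of_forall fun t ht => ?_
    have h := hlip t ⟨hx1.trans ht.1.le, ht.2⟩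
    rwa [abs_sub_comm x t, abs_of_nonneg (sub_nonneg.2 ht.1.le)] at h
  have c1 : ∫ t in a..x, M * (x - t) = M * ((x - a) ^ 2 / 2) := by
    rw [intervalIntegral.integral_const_mul, intervalIntegral.integral_sub (by simp) (by simp)]
    simp
    left
    ring
  have c2 : ∫ t in x..b, M * (t - x) = M * ((b - x) ^ 2 / 2) := by
    rw [intervalIntegral.integral_const_mul, intervalIntegral.integral_sub (by simp) (by simp)]
    simp
    left
    ring
  have hsum := intervalIntegral.integral_add_adjacent_intervals hi1 hi2
  rw [intervalIntegral.integral_sub (a := a) (b := b) (by simp) hif] at hsum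
  simp only [intervalIntegral.integral_const, smul_eq_mul] at hsum
  have hpos : 0 < b - a := sub_pos.2 hab
  have key : f x - (1 / (b - a)) * ∫ t in a..b, f t
      = ((∫ t in a..x, (f x - f t)) + ∫ t in x..b, (f x - f t)) / (b - a) := by
    rw [hsum]
    field_simp
  rw [key, abs_div, abs_of_pos hpos, div_le_iff₀ hpos]
  refine (abs_add_le _ _).trans ?_
  rw [c1] at e1
  rw [c2] at e2
  refine (add_le_add e1 e2).trans (le_of_eq ?_)
  field_simp
  ring
end

section
/- Let f : [a,b] → ℝ be differentiable on [a,b] with f' integrable on [a,b], and let α ≥ 1. Then for every x ∈ [a,b]: ∫_a^b (b−t)^{α−1}(t−x) f'(t) dt = (x−a)(b−a)^{α−1} f(a) + (b−x)·Γ(α)·J_a^{α−1} f(b) − Γ(α+1)·J_a^α f(b). -/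
open MeasureTheory intervalIntegral Set

theorem integration_by_parts_identity
    (a b α : ℝ) (hab : a < b) (hα : 1 ≤ α)
    (f f' : ℝ → ℝ)
    (hf : ∀ t ∈ Set.Icc a b, HasDerivAt f (f' t) t)
    (hf' : IntervalIntegrable f' volume a b)
    (x : ℝ) (hx : x ∈ Set.Icc a b) :
    (∫ t in a..b, (b - t) ^ (α - 1) * (t - x) * f' t) =
      (x - a) * (b - a) ^ (α - 1) * f a
      + (b - x) * Real.Gamma α * RL a (α - 1) f b
      - Real.Gamma (α + 1) * RL a α f b := by
  have hfc : ContinuousOn f (uIcc a b) := by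
    rw [uIcc_of_le hab.le]
    exact fun t ht => (hf t ht).continuousAt.continuousWithinAt
  have hfd : ∀ t ∈ Ioo (min a b) (max a b), HasDerivAt f (f' t) t := by
    rw [min_eq_left hab.le, max_eq_right hab.le]
    exact fun t ht => hf t (Ioo_subset_Icc_self ht)
  have hG : Real.Gamma α ≠ 0 := (Real.Gamma_pos_of_pos (by linarith)).ne'
  have hG1 : Real.Gamma (α + 1) = α * Real.Gamma α := Real.Gamma_add_one (by linarith)
  rcases hα.eq_or_lt with h1 | h1
  · subst h1
    have key := integral_mul_deriv_eq_deriv_mul_of_hasDerivAt (a := a) (b := b)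
      (u := fun t => t - x) (u' := fun _ => 1) (v := f) (v' := f')
      (by fun_prop) hfc (fun t _ => (hasDerivAt_id t).sub_const x) hfd
      intervalIntegrable_const hf'
    simp only [one_mul] at key
    have hG2 : Real.Gamma (1 + 1) = 1 := by rw [hG1, Real.Gamma_one]; norm_num
    simp only [RL, sub_self, Real.rpow_zero, one_mul, hG2, Real.Gamma_one, key]
    norm_num
    ring
  · have hint : ∀ r : ℝ, -1 < r → IntervalIntegrable (fun t => (b - t) ^ r) volume a b := by
      intro r hr
      have h := (intervalIntegrable_rpow' (a := b - a) (b := 0) hr).comp_sub_left b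
      simpa using h
    have hi1 := hint (α - 1 - 1) (by linarith)
    have hi2 := hint (α - 1) (by linarith)
    have key := integral_mul_deriv_eq_deriv_mul_of_hasDerivAt (a := a) (b := b)
      (u := fun t => (b - t) ^ (α - 1) * (t - x))
      (u' := fun t => α * (b - t) ^ (α - 1) - (b - x) * (α - 1) * (b - t) ^ (α - 1 - 1))
      (v := f) (v' := f')
      (by
        refine ContinuousOn.mul ?_ (by fun_prop)
        exact ContinuousOn.rpow_const (by fun_prop) (fun _ _ => Or.inr (by linarith)))
      hfc
      (by
        rw [min_eq_left hab.le, max_eq_right hab.le]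
        intro t ht
        have hpos : 0 < b - t := by linarith [ht.2]
        have hb : HasDerivAt (fun t : ℝ => b - t) (-1) t := (hasDerivAt_id t).const_sub b
        have hd := (hb.rpow_const (p := α - 1) (Or.inl hpos.ne')).mul
          ((hasDerivAt_id t).sub_const x)
        refine hd.congr_deriv ?_
        have e : (b - t) ^ (α - 1) = (b - t) ^ (α - 1 - 1) * (b - t) := by
          rw [Real.rpow_sub_one hpos.ne' (α - 1)]
          field_simp
        simp only [id, e]
        ring)
      hfd ((hi2.const_mul _).sub (hi1.const_mul _)) hf'
    have hs : (∫ t in a..b, (α * (b - t) ^ (α - 1)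
          - (b - x) * (α - 1) * (b - t) ^ (α - 1 - 1)) * f t)
        = α * (∫ t in a..b, (b - t) ^ (α - 1) * f t)
          - (b - x) * (α - 1) * ∫ t in a..b, (b - t) ^ (α - 1 - 1) * f t := by
      rw [← intervalIntegral.integral_const_mul, ← intervalIntegral.integral_const_mul,
        ← intervalIntegral.integral_sub ((hi2.mul_continuousOn hfc).const_mul _)
          ((hi1.mul_continuousOn hfc).const_mul _)]
      congr 1
      ext t
      ring
    have hα1 : α - 1 ≠ 0 := by linarith
    have hG0 : Real.Gamma (α - 1) ≠ 0 := (Real.Gamma_pos_of_pos (by linarith)).ne'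
    have hG3 : Real.Gamma α = (α - 1) * Real.Gamma (α - 1) := by
      have := Real.Gamma_add_one hα1
      simpa using this
    have hα0 : α ≠ 0 := by linarith
    rw [key, hs]
    simp only [RL, if_neg hα1, if_neg hα0, hG1, sub_self, Real.zero_rpow hα1]
    rw [hG3]
    generalize (∫ t in a..b, (b - t) ^ (α - 1 - 1) * f t) = I1
    generalize (∫ t in a..b, (b - t) ^ (α - 1) * f t) = I2
    field_simp
    ring
end

section
/- Let f be a differentiable function on [a,b] with |f'(t)| ≤ M for all t ∈ [a,b], and let α ≥ 1. Then for every x ∈ [a,b): ∫_a^x (b−t)^{α−1} |t − (a+x)/2| dt + ∫_x^b (b−t)^{α−1} |t − (b+x)/2| dt, multiplied by M(b−x)^{1−α}/(b−a), is at most (M(b−x)^{1−α}/(2(b−a)))·[(((b−a)^α − (b−x)^α)/α)·(x−a) + (b−x)^{α+1}/α]. -/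
open MeasureTheory intervalIntegral Set

theorem kernel_aux (b α c d m : ℝ) (hα : 1 ≤ α) (hcd : c ≤ d) (hdb : d ≤ b)
    (hm : m = (c + d) / 2) :
    ∫ t in c..d, (b - t) ^ (α - 1) * |t - m|
      ≤ (((b - c) ^ α - (b - d) ^ α) / α) * ((d - c) / 2) := by
  have hcont : Continuous fun t : ℝ => (b - t) ^ (α - 1) :=
    (continuous_const.sub continuous_id).rpow_const (fun _ => Or.inr (by linarith))
  have hint : ∫ t in c..d, (b - t) ^ (α - 1) = ((b - c) ^ α - (b - d) ^ α) / α := by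
    rw [intervalIntegral.integral_comp_sub_left (fun u : ℝ => u ^ (α - 1)) b,
      integral_rpow (Or.inl (by linarith))]
    simp
  rw [← hint, ← intervalIntegral.integral_mul_const]
  apply intervalIntegral.integral_mono_on hcd
  · exact (hcont.mul (by fun_prop)).intervalIntegrable _ _
  · exact (hcont.mul continuous_const).intervalIntegrable _ _
  · intro t ht
    apply mul_le_mul_of_nonneg_left
    · rw [abs_le]
      constructor <;> linarith [ht.1, ht.2]
    · exact Real.rpow_nonneg (by linarith [ht.2]) _

theorem kernel_integral_estimate
    (a b α M : ℝ) (hab : a < b) (hα : 1 ≤ α) (hM : 0 < M)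
    (f f' : ℝ → ℝ)
    (hf : ∀ t ∈ Set.Icc a b, HasDerivAt f (f' t) t)
    (hbound : ∀ t ∈ Set.Icc a b, |f' t| ≤ M)
    (x : ℝ) (hx : x ∈ Set.Ico a b) :
    M * (b - x) ^ (1 - α) / (b - a) *
        ((∫ t in a..x, (b - t) ^ (α - 1) * |t - (a + x) / 2|)
          + ∫ t in x..b, (b - t) ^ (α - 1) * |t - (b + x) / 2|)
      ≤ M * (b - x) ^ (1 - α) / (2 * (b - a)) *
          ((((b - a) ^ α - (b - x) ^ α) / α) * (x - a) + (b - x) ^ (α + 1) / α) := by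
  obtain ⟨hx1, hx2⟩ := hx
  have h1 := kernel_aux b α a x ((a + x) / 2) hα hx1 hx2.le rfl
  have h2 := kernel_aux b α x b ((b + x) / 2) hα hx2.le le_rfl (by ring)
  rw [sub_self, Real.zero_rpow (by linarith), sub_zero] at h2
  have hbx : 0 < b - x := by linarith
  have hC : 0 ≤ M * (b - x) ^ (1 - α) / (b - a) :=
    div_nonneg (mul_nonneg hM.le (Real.rpow_nonneg hbx.le _)) (by linarith)
  refine (mul_le_mul_of_nonneg_left (add_le_add h1 h2) hC).trans (le_of_eq ?_)
  rw [Real.rpow_add hbx, Real.rpow_one, mul_comm 2 (b - a), ← div_div]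
  ring
end
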